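/- arXiv:math/0512463 — 2 statements merged into one kernel-verified Lean document; each statement's English description precedes it below -/
import Mathlib

section
/- Let T > 0 and c ≥ 0, let g : [0,T] → [0,∞) be Lebesgue integrable, and let u : [0,T] → [0,∞) be absolutely continuous with u(0) = 0 and u'(t) ≤ 2c·u(t) + 2·√(u(t))·g(t) for almost every t ∈ [0,T]. Then sup_{t ∈ [0,T]} √(u(t)) ≤ e^{cT} ∫_0^T g(s) ds. -/
open MeasureTheory Set intervalIntegral

/-!
Where `u > 0`, the hypothesis says that `v = √u` satisfies the linear inequality `v' ≤ c v + g`,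
which the integrating factor `e^{-ct}` turns into a bound on `v`. Since `√` is not Lipschitz at `0`,
this is carried out for `√(ε + u)`, which is absolutely continuous and satisfies the same inequality
with `g` replaced by `|c|√ε + g`; then `ε → 0`.
-/

section

open Filter Real
open scoped NNReal Topology

variable {a b c : ℝ}

theorem lipschitzOnWith_comp_absolutelyContinuousOnInterval {X Y : Type*} [PseudoMetricSpace X]
    [PseudoMetricSpace Y] {f : ℝ → X} {φ : X → Y} {s : Set X} {K : ℝ≥0}
    (hφ : LipschitzOnWith K φ s) (hf : AbsolutelyContinuousOnInterval f a b)
    (hfs : MapsTo f (uIcc a b) s) : AbsolutelyContinuousOnInterval (φ ∘ f) a b := by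
  have hlim := Tendsto.const_mul (K : ℝ) hf
  rw [mul_zero] at hlim
  refine squeeze_zero' (.of_forall fun E ↦ Finset.sum_nonneg fun i _ ↦ dist_nonneg) ?_ hlim
  filter_upwards [mem_inf_of_right (mem_principal_self _)] with E hE
  rw [Finset.mul_sum]
  exact Finset.sum_le_sum fun i hi ↦
    hφ.dist_le_mul _ (hfs (hE.1 i hi).1) _ (hfs (hE.1 i hi).2)

theorem contDiffOn_comp_absolutelyContinuousOnInterval {E : Type*} [NormedAddCommGroup E]
    [NormedSpace ℝ E] {f : ℝ → ℝ} {φ : ℝ → E} (hφ : ContDiffOn ℝ 1 φ (f '' uIcc a b))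
    (hf : AbsolutelyContinuousOnInterval f a b) :
    AbsolutelyContinuousOnInterval (φ ∘ f) a b := by
  have hconvex : Convex ℝ (f '' uIcc a b) :=
    (isPreconnected_uIcc.image f hf.continuousOn).convex
  have hcompact : IsCompact (f '' uIcc a b) := isCompact_uIcc.image_of_continuousOn hf.continuousOn
  obtain ⟨K, hK⟩ := hφ.exists_lipschitzOnWith one_ne_zero hconvex hcompact
  exact lipschitzOnWith_comp_absolutelyContinuousOnInterval hK hf (mapsTo_image f _)

theorem absolutelyContinuousOnInterval_sqrt {f : ℝ → ℝ}
    (hf : AbsolutelyContinuousOnInterval f a b) (hf0 : ∀ t ∈ uIcc a b, f t ≠ 0) :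
    AbsolutelyContinuousOnInterval (fun t ↦ √(f t)) a b := by
  refine contDiffOn_comp_absolutelyContinuousOnInterval (φ := Real.sqrt) ?_ hf
  rintro _ ⟨t, ht, rfl⟩
  exact (contDiffAt_sqrt (hf0 t ht)).contDiffWithinAt

theorem ae_restrict_differentiableAt {f : ℝ → ℝ} (hf : AbsolutelyContinuousOnInterval f a b) :
    ∀ᵐ t ∂volume.restrict (Icc a b), DifferentiableAt ℝ f t :=
  ae_restrict_of_ae_restrict_of_subset Icc_subset_uIcc
    ((ae_restrict_iff' measurableSet_uIcc).2 hf.ae_differentiableAt)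

theorem integral_exp_mul_le {g : ℝ → ℝ} {t : ℝ} (hc : 0 ≤ c) (ht : t ∈ Icc a b)
    (hg_int : IntegrableOn g (Icc a b))
    (hg_nonneg : ∀ᵐ s ∂volume.restrict (Icc a b), 0 ≤ g s) :
    ∫ s in a..t, exp (c * (t - s)) * g s ≤ exp (c * (b - a)) * ∫ s in a..b, g s := by
  have hg_int_b : IntervalIntegrable g volume a b :=
    (intervalIntegrable_iff_integrableOn_Icc_of_le (ht.1.trans ht.2)).2 hg_int
  have hg_int_t : IntervalIntegrable g volume a t :=
    hg_int_b.mono_set (uIcc_subset_uIcc_left (Icc_subset_uIcc ht))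
  have hg_nonneg_t : ∀ᵐ s ∂volume.restrict (Icc a t), 0 ≤ g s :=
    ae_restrict_of_ae_restrict_of_subset (Icc_subset_Icc_right ht.2) hg_nonneg
  have hg_nonneg_Ioc : ∀ᵐ s ∂volume.restrict (Ioc a b), 0 ≤ g s :=
    ae_restrict_of_ae_restrict_of_subset Ioc_subset_Icc_self hg_nonneg
  calc ∫ s in a..t, exp (c * (t - s)) * g s
      ≤ ∫ s in a..t, exp (c * (b - a)) * g s := by
        refine integral_mono_ae_restrict ht.1 (hg_int_t.continuousOn_mul (by fun_prop))
          (hg_int_t.const_mul _) ?_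
        filter_upwards [hg_nonneg_t, ae_restrict_mem measurableSet_Icc] with s hgs hs
        gcongr
        exacts [ht.2, hs.1]
    _ = exp (c * (b - a)) * ∫ s in a..t, g s := intervalIntegral.integral_const_mul _ _
    _ ≤ exp (c * (b - a)) * ∫ s in a..b, g s := by
        gcongr
        exact integral_mono_interval le_rfl ht.1 ht.2 hg_nonneg_Ioc hg_int_b

theorem le_exp_mul_add_integral_of_deriv_le {v h : ℝ → ℝ} (hab : a ≤ b)
    (hv : AbsolutelyContinuousOnInterval v a b) (hh : IntervalIntegrable h volume a b)
    (hderiv : ∀ᵐ t ∂volume.restrict (Icc a b), deriv v t ≤ c * v t + h t) :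
    v b ≤ exp (c * (b - a)) * v a + ∫ s in a..b, exp (c * (b - s)) * h s := by
  have hE : AbsolutelyContinuousOnInterval (fun t ↦ exp (c * (b - t))) a b :=
    ContDiffOn.absolutelyContinuousOnInterval (by fun_prop)
  have hF : AbsolutelyContinuousOnInterval (fun t ↦ exp (c * (b - t)) * v t) a b := hE.fun_mul hv
  have hF_deriv : ∀ᵐ t ∂volume.restrict (Icc a b),
      deriv (fun t ↦ exp (c * (b - t)) * v t) t ≤ exp (c * (b - t)) * h t := by
    filter_upwards [hderiv, ae_restrict_differentiableAt hv] with t hle hdiff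
    have hexp : HasDerivAt (fun t ↦ exp (c * (b - t))) (exp (c * (b - t)) * (c * -1)) t :=
      (((hasDerivAt_id t).const_sub b).const_mul c).exp
    calc deriv (fun t ↦ exp (c * (b - t)) * v t) t
        = exp (c * (b - t)) * (deriv v t - c * v t) := by
          rw [(hexp.fun_mul hdiff.hasDerivAt).deriv]; ring
      _ ≤ exp (c * (b - t)) * h t := by gcongr; linarith
  have hint := integral_mono_ae_restrict hab hF.intervalIntegrable_deriv
    (hh.continuousOn_mul (by fun_prop)) hF_deriv
  rw [hF.integral_deriv_eq_sub, sub_self, mul_zero, exp_zero, one_mul] at hint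
  linarith

theorem div_two_mul_sqrt_add_le {ε x y g : ℝ} (hε : 0 < ε) (hx : 0 ≤ x) (hg : 0 ≤ g)
    (hy : y ≤ 2 * c * x + 2 * √x * g) :
    y / (2 * √(ε + x)) ≤ c * √(ε + x) + (|c| * √ε + g) := by
  have hr_sq : √(ε + x) * √(ε + x) = ε + x := mul_self_sqrt (by positivity)
  have hxr : √x * g ≤ √(ε + x) * g := by gcongr; linarith
  -- Writing `c x = c (ε + x) - c ε` leaves the error `-c ε / √(ε + x)`, at most `|c| √ε`.
  have hεr : -c * ε ≤ |c| * (√ε * √(ε + x)) := by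
    calc -c * ε ≤ |c| * (√ε * √ε) := by
          rw [mul_self_sqrt hε.le]; gcongr; exact neg_le_abs c
      _ ≤ |c| * (√ε * √(ε + x)) := by gcongr; linarith
  rw [div_le_iff₀ (by positivity)]
  linear_combination hy + 2 * hxr + 2 * hεr - 2 * c * hr_sq

theorem sqrt_add_le_exp_mul_add_integral_of_deriv_le {ε : ℝ} {u g : ℝ → ℝ} (hε : 0 < ε)
    (hab : a ≤ b) (hu : AbsolutelyContinuousOnInterval u a b) (hu_nonneg : ∀ t ∈ Icc a b, 0 ≤ u t)
    (hg_int : IntervalIntegrable g volume a b)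
    (hg_nonneg : ∀ᵐ t ∂volume.restrict (Icc a b), 0 ≤ g t)
    (hderiv : ∀ᵐ t ∂volume.restrict (Icc a b), deriv u t ≤ 2 * c * u t + 2 * √(u t) * g t) :
    √(ε + u b) ≤ exp (c * (b - a)) * √(ε + u a) +
      ∫ s in a..b, exp (c * (b - s)) * (|c| * √ε + g s) := by
  have hpos : ∀ t ∈ Icc a b, 0 < ε + u t := fun t ht ↦ add_pos_of_pos_of_nonneg hε (hu_nonneg t ht)
  have hεu : AbsolutelyContinuousOnInterval (fun t ↦ ε + u t) a b :=
    (contDiffOn_const (c := ε)).absolutelyContinuousOnInterval.fun_add hu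
  have hsqrt : AbsolutelyContinuousOnInterval (fun t ↦ √(ε + u t)) a b :=
    absolutelyContinuousOnInterval_sqrt hεu fun t ht ↦ (hpos t (uIcc_of_le hab ▸ ht)).ne'
  refine le_exp_mul_add_integral_of_deriv_le hab hsqrt (intervalIntegrable_const.add hg_int) ?_
  filter_upwards [hderiv, hg_nonneg, ae_restrict_differentiableAt hu,
    ae_restrict_mem measurableSet_Icc] with t hle hgt hdiff ht
  rw [((hdiff.hasDerivAt.const_add ε).sqrt (hpos t ht).ne').deriv]
  exact div_two_mul_sqrt_add_le hε (hu_nonneg t ht) hgt hle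

theorem sqrt_le_exp_mul_add_integral_of_deriv_le {u g : ℝ → ℝ} (hab : a ≤ b)
    (hu : AbsolutelyContinuousOnInterval u a b) (hu_nonneg : ∀ t ∈ Icc a b, 0 ≤ u t)
    (hg_int : IntervalIntegrable g volume a b)
    (hg_nonneg : ∀ᵐ t ∂volume.restrict (Icc a b), 0 ≤ g t)
    (hderiv : ∀ᵐ t ∂volume.restrict (Icc a b), deriv u t ≤ 2 * c * u t + 2 * √(u t) * g t) :
    √(u b) ≤ exp (c * (b - a)) * √(u a) + ∫ s in a..b, exp (c * (b - s)) * g s := by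
  set E := ∫ s in a..b, exp (c * (b - s))
  set I := ∫ s in a..b, exp (c * (b - s)) * g s
  have hsplit (k : ℝ) : ∫ s in a..b, exp (c * (b - s)) * (k + g s) = E * k + I := by
    simp only [mul_add]
    rw [integral_add (Continuous.intervalIntegrable (by fun_prop) a b)
      (hg_int.continuousOn_mul (by fun_prop)), intervalIntegral.integral_mul_const]
  have hbound : ∀ᶠ ε in 𝓝[>] (0 : ℝ),
      √(ε + u b) ≤ exp (c * (b - a)) * √(ε + u a) + (E * (|c| * √ε) + I) := by
    filter_upwards [self_mem_nhdsWithin] with ε hε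
    rw [← hsplit]
    exact sqrt_add_le_exp_mul_add_integral_of_deriv_le hε hab hu hu_nonneg hg_int hg_nonneg hderiv
  have hleft : Continuous fun ε ↦ √(ε + u b) := by fun_prop
  have hright : Continuous fun ε ↦ exp (c * (b - a)) * √(ε + u a) + (E * (|c| * √ε) + I) := by
    fun_prop
  simpa using le_of_tendsto_of_tendsto (hleft.continuousWithinAt (x := 0))
    (hright.continuousWithinAt (x := 0)) hbound

theorem sqrt_sup_le_of_gronwall_general {u u' g : ℝ → ℝ}
    (hg_int : IntegrableOn g (Icc a b))
    (hg_nonneg : ∀ᵐ t ∂volume.restrict (Icc a b), 0 ≤ g t)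
    (hu_nonneg : ∀ t ∈ Icc a b, 0 ≤ u t)
    (hu'_int : IntegrableOn u' (Icc a b))
    (hu_ac : ∀ t ∈ Icc a b, u t = u a + ∫ s in a..t, u' s)
    (hode : ∀ᵐ t ∂volume.restrict (Icc a b), u' t ≤ 2 * c * u t + 2 * √(u t) * g t) :
    ∀ t ∈ Icc a b,
      √(u t) ≤ exp (c * (t - a)) * √(u a) + ∫ s in a..t, exp (c * (t - s)) * g s := by
  intro t ht
  have hsub : Icc a t ⊆ Icc a b := Icc_subset_Icc_right ht.2
  have hg_int_t : IntervalIntegrable g volume a t :=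
    (intervalIntegrable_iff_integrableOn_Icc_of_le ht.1).2 (hg_int.mono_set hsub)
  have hu'_int_t : IntervalIntegrable u' volume a t :=
    (intervalIntegrable_iff_integrableOn_Icc_of_le ht.1).2 (hu'_int.mono_set hsub)
  let U : ℝ → ℝ := fun x ↦ u a + ∫ s in a..x, u' s
  have hU_eq : EqOn u U (Icc a b) := hu_ac
  have hU : AbsolutelyContinuousOnInterval U a t :=
    (contDiffOn_const (c := u a)).absolutelyContinuousOnInterval.fun_add
      (hu'_int_t.absolutelyContinuousOnInterval_intervalIntegral left_mem_uIcc)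
  have hU_deriv : ∀ᵐ x ∂volume.restrict (Icc a t), deriv U x = u' x := by
    rw [ae_restrict_iff' measurableSet_Icc, ← uIcc_of_le ht.1]
    filter_upwards [hu'_int_t.ae_hasDerivAt_integral] with x hx hxt
    exact ((hx hxt a left_mem_uIcc).const_add (u a)).deriv
  rw [hU_eq ht, hU_eq (left_mem_Icc.2 (ht.1.trans ht.2))]
  refine sqrt_le_exp_mul_add_integral_of_deriv_le ht.1 hU
    (fun x hx ↦ hU_eq (hsub hx) ▸ hu_nonneg x (hsub hx)) hg_int_t
    (ae_restrict_of_ae_restrict_of_subset hsub hg_nonneg) ?_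
  filter_upwards [hU_deriv, ae_restrict_of_ae_restrict_of_subset hsub hode,
    ae_restrict_mem measurableSet_Icc] with x hx hle hxt
  rwa [hx, ← hU_eq (hsub hxt)]

end

/-- Gronwall-type lemma: if `u ≥ 0` is absolutely continuous on `[0,T]` (i.e. the
indefinite integral of an integrable function `u'`), `u 0 = 0`, and
`u' t ≤ 2c u t + 2 √(u t) g t` a.e. on `[0,T]`, then
`sup_{t∈[0,T]} √(u t) ≤ e^{cT} ∫_0^T g`. -/
theorem sqrt_sup_le_of_gronwall
    (T : ℝ) (hT : 0 < T) (c : ℝ) (hc : 0 ≤ c)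
    (u u' g : ℝ → ℝ)
    (hg_int : IntegrableOn g (Icc 0 T))
    (hg_nonneg : ∀ t ∈ Icc (0 : ℝ) T, 0 ≤ g t)
    (hu_nonneg : ∀ t ∈ Icc (0 : ℝ) T, 0 ≤ u t)
    (hu'_int : IntegrableOn u' (Icc 0 T))
    (hu_ac : ∀ t ∈ Icc (0 : ℝ) T, u t = ∫ s in (0 : ℝ)..t, u' s)
    (hu0 : u 0 = 0)
    (hode : ∀ᵐ t ∂(volume.restrict (Icc (0 : ℝ) T)),
      u' t ≤ 2 * c * u t + 2 * Real.sqrt (u t) * g t) :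
    ∀ t ∈ Icc (0 : ℝ) T,
      Real.sqrt (u t) ≤ Real.exp (c * T) * ∫ s in (0 : ℝ)..T, g s := by
  intro t ht
  have hg := ae_restrict_of_forall_mem (μ := volume) measurableSet_Icc hg_nonneg
  simpa [hu0] using (sqrt_sup_le_of_gronwall_general hg_int hg hu_nonneg hu'_int
    (by simpa [hu0] using hu_ac) hode t ht).trans
    (add_le_add_right (integral_exp_mul_le hc ht hg_int hg) _)
end

section
/- Let T > 0, let B be a real Banach space, and equip C([0,T]; B) with the supremum norm. For w ∈ C([0,T]; B) and N ∈ ℕ let w^{(N)} denote its N-times piecewise linear approximation. Let I : C([0,T]; B) → [0, +∞] be a function all of whose sublevel sets {w : I(w) ≤ r}, r ≥ 0, are compact. Then for every δ > 0, lim_{N→∞} inf{ I(w) : w ∈ C([0,T]; B), sup_{t ∈ [0,T]} ‖w_t − w^{(N)}_t‖ ≥ δ } = +∞, with the convention inf ∅ = +∞. -/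
open Filter Topology Set

/-- The `N`-times piecewise linear approximation of a continuous path
`w : [0,T] → B`: on `[t_i, t_{i+1}]` with `t_i = iT/N` it equals
`(N/T)[(t - t_i) w_{t_{i+1}} + (t_{i+1} - t) w_{t_i}]`. -/
noncomputable def piecewiseLinear {B : Type*} [NormedAddCommGroup B] [NormedSpace ℝ B]
    {T : ℝ} (hT : 0 ≤ T) (w : C(Set.Icc (0 : ℝ) T, B)) (N : ℕ)
    (t : Set.Icc (0 : ℝ) T) : B :=
  let i : ℕ := min ⌊(t : ℝ) * N / T⌋₊ (N - 1)
  ((N : ℝ) / T) •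
    ((((t : ℝ) - (i : ℝ) * T / N) • w (Set.projIcc 0 T hT (((i : ℝ) + 1) * T / N))) +
      ((((i : ℝ) + 1) * T / N - (t : ℝ)) • w (Set.projIcc 0 T hT ((i : ℝ) * T / N))))

/-!
On a compact set of paths evaluation is jointly continuous, so the sublevel sets of `I` are
equicontinuous, hence uniformly equicontinuous because `[0, T]` is compact. The value `w^{(N)}_t` is
a convex combination of values of `w` at two times within `T / N` of `t`, so `w^{(N)} → w` uniformly
over each sublevel set. For large `N`, a path that stays `δ`-far from its approximation therefore
lies outside any prescribed sublevel set.
-/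

section Order

variable {X ι α : Type*} [CompleteLinearOrder α] [TopologicalSpace α] [OrderTopology α]

theorem tendsto_biInf_nhds_top_of_eventually_lt {l : Filter ι} {A : ι → Set X} {I : X → α}
    (h : ∀ r < ⊤, ∀ᶠ i in l, ∀ x ∈ A i, r < I x) :
    Tendsto (fun i => ⨅ x ∈ A i, I x) l (𝓝 ⊤) := by
  refine tendsto_order.2 ⟨fun r hr => ?_, fun _ hr => absurd hr not_top_lt⟩
  -- The infimum of values `> r` is only `≥ r`, so a level strictly between `r` and `⊤` is used
  -- when there is one; otherwise all these values are `⊤`.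
  by_cases hcov : r ⋖ ⊤
  · filter_upwards [h r hr] with i hi
    have hI : ∀ x ∈ A i, I x = ⊤ := fun x hx => not_lt_top_iff.1 (hcov.2 (hi x hx))
    rwa [iInf₂_eq_top.2 hI]
  · obtain ⟨s, hrs, hs⟩ := (not_covBy_iff hr).1 hcov
    filter_upwards [h s hs] with i hi
    exact hrs.trans_le (le_iInf₂ fun x hx => (hi x hx).le)

end Order

theorem equicontinuous_coe_of_isCompact {X Y : Type*} [TopologicalSpace X] [UniformSpace Y]
    [LocallyCompactPair X Y] {K : Set C(X, Y)} (hK : IsCompact K) :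
    Equicontinuous fun w : K => ⇑(w : C(X, Y)) := by
  intro x u hu
  have hcont : Continuous (Function.uncurry fun (y : X) (w : C(X, Y)) => w y) := by fun_prop
  obtain ⟨v, hv, hvu⟩ :=
    hK.mem_uniformity_of_prod hcont.continuousOn (mem_univ x) (symm_le_uniformity hu)
  rw [nhdsWithin_univ] at hv
  filter_upwards [hv] with y hy w using hvu y hy w w.2

section GridIndex

variable {k : Type*} [Semiring k] [LinearOrder k] [IsStrictOrderedRing k] [FloorSemiring k] {x : k}

theorem min_floor_pred_le (hx : 0 ≤ x) (N : ℕ) : ((min ⌊x⌋₊ (N - 1) : ℕ) : k) ≤ x :=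
  (Nat.cast_le.2 (min_le_left _ _)).trans (Nat.floor_le hx)

theorem le_min_floor_pred_add_one {N : ℕ} (hx : x ≤ N) :
    x ≤ (min ⌊x⌋₊ (N - 1) : ℕ) + 1 := by
  rw [Nat.cast_min, ← min_add_add_right]
  exact le_min (Nat.lt_floor_add_one x).le (hx.trans (by exact_mod_cast le_tsub_add))

end GridIndex

theorem dist_projIcc_le {a b : ℝ} (h : a ≤ b) (x : ℝ) (t : Icc a b) :
    dist (projIcc a b h x) t ≤ |x - t| := by
  simpa [Real.dist_eq] using (LipschitzWith.projIcc h).dist_le_mul x t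

section PiecewiseLinear

variable {B : Type*} [NormedAddCommGroup B] [NormedSpace ℝ B] {T : ℝ}

theorem exists_piecewiseLinear_mem_segment (hT : 0 < T) (w : C(Icc (0 : ℝ) T, B)) {N : ℕ}
    (hN : N ≠ 0) (t : Icc (0 : ℝ) T) :
    ∃ a b : Icc (0 : ℝ) T, dist a t ≤ T / N ∧ dist b t ≤ T / N ∧
      piecewiseLinear hT.le w N t ∈ segment ℝ (w a) (w b) := by
  have hN' : (0 : ℝ) < N := by positivity
  set x : ℝ := t * N / T with hx
  set i : ℕ := min ⌊x⌋₊ (N - 1)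
  have ht : (t : ℝ) = x * (T / N) := by rw [hx]; field_simp
  have hix : (i : ℝ) ≤ x := min_floor_pred_le (by have := t.2.1; positivity) N
  have hxi : x ≤ i + 1 := by
    refine le_min_floor_pred_add_one ?_
    rw [hx, div_le_iff₀ hT, mul_comm]
    gcongr
    exact t.2.2
  have near (y : ℝ) (hy : |y - x| ≤ 1) :
      dist (projIcc 0 T hT.le (y * T / N)) t ≤ T / N := by
    calc dist (projIcc 0 T hT.le (y * T / N)) t
      _ ≤ |y * T / N - t| := dist_projIcc_le hT.le _ t
      _ = |y - x| * (T / N) := by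
        rw [ht, mul_div_assoc, ← sub_mul, abs_mul, abs_of_pos (div_pos hT hN')]
      _ ≤ T / N := mul_le_of_le_one_left (by positivity) hy
  refine ⟨projIcc 0 T hT.le (i * T / N), projIcc 0 T hT.le ((i + 1) * T / N),
    near _ (abs_le.2 ⟨by linarith, by linarith⟩), near _ (abs_le.2 ⟨by linarith, by linarith⟩),
    i + 1 - x, x - i, by linarith, by linarith, by ring, ?_⟩
  have hleft : i + 1 - x = N / T * ((i + 1) * T / N - t) := by rw [ht]; field_simp
  have hright : x - i = N / T * (t - i * T / N) := by rw [ht]; field_simp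
  rw [hleft, hright, mul_smul, mul_smul, ← smul_add, add_comm]
  rfl

theorem dist_piecewiseLinear_le (hT : 0 < T) {w : C(Icc (0 : ℝ) T, B)} {N : ℕ} (hN : N ≠ 0)
    {t : Icc (0 : ℝ) T} {ε : ℝ} (hw : ∀ s, dist s t ≤ T / N → dist (w s) (w t) ≤ ε) :
    dist (piecewiseLinear hT.le w N t) (w t) ≤ ε := by
  obtain ⟨a, b, ha, hb, hab⟩ := exists_piecewiseLinear_mem_segment hT w hN t
  exact (convex_closedBall (w t) ε).segment_subset (hw a ha) (hw b hb) hab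

theorem tendstoUniformly_piecewiseLinear {ι : Type*} (hT : 0 < T) {F : ι → C(Icc (0 : ℝ) T, B)}
    (hF : Equicontinuous fun j => ⇑(F j)) :
    TendstoUniformly (fun N (p : ι × Icc (0 : ℝ) T) => piecewiseLinear hT.le (F p.1) N p.2)
      (fun p => F p.1 p.2) atTop := by
  have hF' := CompactSpace.uniformEquicontinuous_of_equicontinuous hF
  refine Metric.tendstoUniformly_iff.2 fun ε hε => ?_
  obtain ⟨η, hη, hmod⟩ := Metric.uniformEquicontinuous_iff.1 hF' (ε / 2) (half_pos hε)
  have hmesh : ∀ᶠ N : ℕ in atTop, T / N < η :=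
    (tendsto_const_div_atTop_nhds_zero_nat T).eventually_lt_const hη
  filter_upwards [hmesh, eventually_ne_atTop 0] with N hNη hN ⟨j, t⟩
  rw [dist_comm]
  exact (dist_piecewiseLinear_le hT hN fun s hs =>
    (hmod s t (hs.trans_lt hNη) j).le).trans_lt (half_lt_self hε)

theorem inf_rate_on_piecewiseLinear_far_tendsto_top_general {α : Type*} [CompleteLinearOrder α]
    [TopologicalSpace α] [OrderTopology α] (hT : 0 < T) (I : C(Icc (0 : ℝ) T, B) → α)
    (hI : ∀ r < ⊤, Equicontinuous fun w : {w | I w ≤ r} => ⇑(w : C(Icc (0 : ℝ) T, B)))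
    {δ : ℝ} (hδ : 0 < δ) :
    Tendsto
      (fun N : ℕ =>
        ⨅ w ∈ {w : C(Icc (0 : ℝ) T, B) |
            δ ≤ ⨆ t : Icc (0 : ℝ) T, ‖w t - piecewiseLinear hT.le w N t‖}, I w)
      atTop (𝓝 ⊤) := by
  refine tendsto_biInf_nhds_top_of_eventually_lt fun r hr => ?_
  have hconv := Metric.tendstoUniformly_iff.1 (tendstoUniformly_piecewiseLinear hT (hI r hr))
  filter_upwards [hconv (δ / 2) (half_pos hδ)] with N hN w hfar
  by_contra! hw
  have hclose : ⨆ t, ‖w t - piecewiseLinear hT.le w N t‖ ≤ δ / 2 :=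
    Real.iSup_le (fun t => dist_eq_norm (w t) _ ▸ (hN (⟨w, hw⟩, t)).le) (half_pos hδ).le
  exact (half_lt_self hδ).not_ge (hfar.trans hclose)

end PiecewiseLinear

/-- If `I` is a good rate function on `C([0,T]; B)` (compact sublevel sets), then
`inf { I(w) : sup_{t∈[0,T]} ‖w_t - w^{(N)}_t‖ ≥ δ } → +∞` as `N → ∞`, for every `δ > 0`. -/
theorem inf_rate_on_piecewiseLinear_far_tendsto_top
    {B : Type*} [NormedAddCommGroup B] [NormedSpace ℝ B]
    (T : ℝ) (hT : 0 < T)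
    (I : C(Set.Icc (0 : ℝ) T, B) → ENNReal)
    (hI : ∀ r : ENNReal, r ≠ ⊤ → IsCompact {w : C(Set.Icc (0 : ℝ) T, B) | I w ≤ r})
    (δ : ℝ) (hδ : 0 < δ) :
    Tendsto
      (fun N : ℕ =>
        ⨅ w ∈ {w : C(Set.Icc (0 : ℝ) T, B) |
            δ ≤ ⨆ t : Set.Icc (0 : ℝ) T, ‖w t - piecewiseLinear hT.le w N t‖}, I w)
      atTop (𝓝 ⊤) :=
  inf_rate_on_piecewiseLinear_far_tendsto_top_general hT I
    (fun r hr => equicontinuous_coe_of_isCompact (hI r hr.ne)) hδ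
end
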